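/- Let α ∈ (0,1], let u be a classical solution of the localized fractional heat equation, let x₀ ∈ ℝ^n with |x₀| = 1 and t₀ ∈ [−1,0], and let C₀ ≥ 0. Assume |u(t,x,y) − u(t₀,x₀,0)| ≤ C₀ (|x−x₀|² + y^{1−a} + (t₀−t))^α for all (t,x,y) ∈ ({−1} × closure(B_1^+)) ∪ ([−1,t₀] × closure((∂B_1)^+)). Then there is a constant C, depending only on α, n and a (but not on t₀), such that |u(t,x,y) − u(t₀,x₀,0)| ≤ C C₀ (|x−x₀|² + y^{1−a} + (t₀−t))^{sα/2} for all (t,x,y) ∈ [−1,t₀] × closure(B_1^+). -/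

import Mathlib

open Set Filter Topology MeasureTheory
open scoped RealInnerProductSpace

noncomputable section

abbrev En (n : ℕ) := EuclideanSpace ℝ (Fin n)

/-- The open upper half ball `B_r^+`. -/
def halfBall (n : ℕ) (r : ℝ) : Set (En n × ℝ) :=
  {p | ‖p.1‖ ^ 2 + p.2 ^ 2 < r ^ 2 ∧ 0 < p.2}

/-- The closure of the upper half ball. -/
def closedHalfBall (n : ℕ) (r : ℝ) : Set (En n × ℝ) :=
  {p | ‖p.1‖ ^ 2 + p.2 ^ 2 ≤ r ^ 2 ∧ 0 ≤ p.2}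

/-- `B_r^+ ∪ B_r^0`. -/
def halfBallWithBase (n : ℕ) (r : ℝ) : Set (En n × ℝ) :=
  {p | ‖p.1‖ ^ 2 + p.2 ^ 2 < r ^ 2 ∧ 0 ≤ p.2}

/-- The flat ball `B_r^0` in `ℝⁿ`. -/
def flatBall (n : ℕ) (r : ℝ) : Set (En n) := {x | ‖x‖ < r}

/-- `(∂B_1)^+`. -/
def spherePlus (n : ℕ) : Set (En n × ℝ) := {p | ‖p.1‖ ^ 2 + p.2 ^ 2 = 1 ∧ 0 < p.2}

/-- closure of `(∂B_1)^+`. -/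
def closedSpherePlus (n : ℕ) : Set (En n × ℝ) := {p | ‖p.1‖ ^ 2 + p.2 ^ 2 = 1 ∧ 0 ≤ p.2}

/-- Second directional derivative of `u` at `p` in direction `v`. -/
def D2 {n : ℕ} (u : En n × ℝ → ℝ) (p v : En n × ℝ) : ℝ :=
  fderiv ℝ (fun q => fderiv ℝ u q v) p v

/-- The Laplacian in the `n+1` variables `(x, y)`. -/
def lap {n : ℕ} (u : En n × ℝ → ℝ) (p : En n × ℝ) : ℝ :=
  (∑ i : Fin n, D2 u p (EuclideanSpace.single i 1, 0)) + D2 u p (0, 1)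

/-- `u` is `a`-harmonic on `Ω`: it is `C²` there and `Δu + (a/y) ∂_y u = 0`. -/
def IsAHarmonicOn {n : ℕ} (a : ℝ) (u : En n × ℝ → ℝ) (Ω : Set (En n × ℝ)) : Prop :=
  ContDiffOn ℝ 2 u Ω ∧ ∀ p ∈ Ω, lap u p + (a / p.2) * fderiv ℝ u p (0, 1) = 0

/-- `lim_{y → 0⁺} y^a ∂_y w(x, y) = L`. -/
def NormalDerivLimit {n : ℕ} (a : ℝ) (w : En n × ℝ → ℝ) (x : En n) (L : ℝ) : Prop :=
  Tendsto (fun y : ℝ => y ^ a * fderiv ℝ w (x, y) (0, 1)) (𝓝[>] (0 : ℝ)) (𝓝 L)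

/-- The boundary-restriction `(t, x) ↦ u(t, x, 0)`. -/
def bdryFun {n : ℕ} (u : ℝ → En n × ℝ → ℝ) : ℝ × En n → ℝ := fun q => u q.1 (q.2, 0)

/-- A classical solution of the extended drift–diffusion equation on
`[-1,0] × closure (B_1^+)` with drift `b` and right-hand side `f`. -/
def IsExtDDSolution {n : ℕ} (a : ℝ) (b : ℝ → En n → En n) (f : ℝ → En n → ℝ)
    (u : ℝ → En n × ℝ → ℝ) : Prop :=
  ContinuousOn (fun q : ℝ × (En n × ℝ) => u q.1 q.2) (Icc (-1 : ℝ) 0 ×ˢ closedHalfBall n 1) ∧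
  (∀ t ∈ Icc (-1 : ℝ) 0, IsAHarmonicOn a (u t) (halfBall n 1)) ∧
  (∀ q ∈ Ioc (-1 : ℝ) 0 ×ˢ flatBall n 1,
      DifferentiableWithinAt ℝ (bdryFun u) (Ioc (-1 : ℝ) 0 ×ˢ flatBall n 1) q) ∧
  (∀ t x, (t, x) ∈ Ioc (-1 : ℝ) 0 ×ˢ flatBall n 1 →
      ∃ L : ℝ, NormalDerivLimit a (u t) x L ∧
        fderivWithin ℝ (bdryFun u) (Ioc (-1 : ℝ) 0 ×ˢ flatBall n 1) (t, x) (1, 0) +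
          fderivWithin ℝ (bdryFun u) (Ioc (-1 : ℝ) 0 ×ˢ flatBall n 1) (t, x) (0, b t x) -
          L = f t x)

/-- A classical solution of the localized fractional heat equation on
`[-1,0] × closure (B_1^+)`. -/
def IsFracHeatSolution {n : ℕ} (a : ℝ) (u : ℝ → En n × ℝ → ℝ) : Prop :=
  ContinuousOn (fun q : ℝ × (En n × ℝ) => u q.1 q.2) (Icc (-1 : ℝ) 0 ×ˢ closedHalfBall n 1) ∧
  (∀ t ∈ Icc (-1 : ℝ) 0, IsAHarmonicOn a (u t) (halfBall n 1)) ∧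
  (∀ t ∈ Ioc (-1 : ℝ) 0, ∀ x ∈ flatBall n 1,
      DifferentiableWithinAt ℝ (fun τ => u τ (x, 0)) (Ioc (-1 : ℝ) 0) t ∧
      NormalDerivLimit a (u t) x (derivWithin (fun τ => u τ (x, 0)) (Ioc (-1 : ℝ) 0) t))

/-!
Both `⟪x₀, x⟫` and `t + y ^ (2 * s) / (2 * s)` solve the equation, and solutions obey a maximum
principle on `[-1, t₀] × closure(B_1^+)` with respect to the bottom and the spherical part of the
boundary: a maximum at a base point with `∂_t u > 0` there would force `∂_y u > 0` just above it.

On the closed half ball `|x - x₀|² + y² ≤ 2 (1 - ⟪x₀, x⟫) ≤ 2 |x - x₀|`. The first inequality bounds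
the gauge `|x - x₀|² + y ^ (2 * s) + (t₀ - t)` by a multiple of `(2 (1 - ⟪x₀, x⟫)) ^ s`, minus
`y ^ (2 * s) / (2 * s)`, plus `t₀ - t`. Since `z ↦ z ^ s` and `z ↦ z ^ α` are concave, replacing
them by tangent lines gives an affine function of the two solutions which dominates the data. At a
point where the gauge equals `d`, the tangents are taken at `d ^ (1 / 2)` and `d ^ (s / 2)`, and the
second inequality bounds the resulting barrier there by a multiple of `d ^ (s * α / 2)`.
-/

section RpowTangent

/-- The tangent line to `x ↦ x ^ r` at `δ`, evaluated at `x`. It lies above the graph when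
`0 ≤ r ≤ 1`, which linearizes the boundary data of the problem. -/
def rpowTangent (r δ x : ℝ) : ℝ := δ ^ r + r * δ ^ (r - 1) * (x - δ)

variable {r δ x y k : ℝ}

lemma rpow_le_rpowTangent (hr : r ∈ Icc 0 1) (hδ : 0 < δ) (hx : 0 ≤ x) :
    x ^ r ≤ rpowTangent r δ x := by
  have amgm : x ^ r * δ ^ (1 - r) ≤ r * x + (1 - r) * δ :=
    Real.geom_mean_le_arith_mean2_weighted hr.1 (sub_nonneg.2 hr.2) hx hδ.le (by ring)
  calc x ^ r = x ^ r * δ ^ (1 - r) * δ ^ (r - 1) := by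
        rw [mul_assoc, ← Real.rpow_add hδ]; simp
    _ ≤ (r * x + (1 - r) * δ) * δ ^ (r - 1) := by gcongr
    _ = rpowTangent r δ x := by
        rw [rpowTangent, Real.rpow_sub_one hδ.ne']
        field_simp
        ring

lemma rpowTangent_mono (hr : 0 ≤ r) (hδ : 0 < δ) (hxy : x ≤ y) :
    rpowTangent r δ x ≤ rpowTangent r δ y := by
  unfold rpowTangent
  gcongr

lemma rpowTangent_le_mul_rpow (hr : r ∈ Icc 0 1) (hδ : 0 < δ) (hk : 1 ≤ k) (hx : x ≤ k * δ) :
    rpowTangent r δ x ≤ k * δ ^ r :=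
  calc rpowTangent r δ x ≤ rpowTangent r δ (k * δ) := rpowTangent_mono hr.1 hδ hx
    _ = (1 + r * (k - 1)) * δ ^ r := by
        rw [rpowTangent, Real.rpow_sub_one hδ.ne']
        field_simp
    _ ≤ k * δ ^ r := by
        gcongr
        nlinarith [hr.2]

lemma le_mul_rpow_of_le (hr : r ∈ Icc 0 1) (hk : 1 ≤ k) (hx : 0 ≤ x) (hxk : x ≤ k) :
    x ≤ k * x ^ r :=
  calc x = x ^ (1 - r) * x ^ r := by
        rw [← Real.rpow_add_of_nonneg hx (sub_nonneg.2 hr.2) hr.1]; simp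
    _ ≤ k ^ (1 - r) * x ^ r := by gcongr; exact sub_nonneg.2 hr.2
    _ ≤ k * x ^ r := by
        gcongr
        exact Real.rpow_le_self_of_one_le hk (by linarith [hr.1])

end RpowTangent

section LocalMax

lemma deriv_deriv_nonpos_of_isLocalMax {f : ℝ → ℝ} {t : ℝ} (h : IsLocalMax f t)
    (hf : ContinuousAt f t) : deriv (deriv f) t ≤ 0 := by
  by_contra! hpos
  have h_const : f =ᶠ[𝓝 t] fun _ => f t := by
    filter_upwards [h, isLocalMin_of_deriv_deriv_pos hpos h.deriv_eq_zero hf]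
      with x hmax hmin using le_antisymm hmax hmin
  simp [h_const.deriv.deriv_eq] at hpos

variable {E : Type*} [NormedAddCommGroup E] [NormedSpace ℝ E] {f : E → ℝ} {p : E}

lemma differentiableAt_fderiv_apply (hf : ContDiffAt ℝ 2 f p) (w : E) :
    DifferentiableAt ℝ (fun q => fderiv ℝ f q w) p :=
  ((hf.fderiv_right (m := 1) (by norm_num)).differentiableAt one_ne_zero).clm_apply
    (differentiableAt_const w)

lemma fderiv_const_mul_apply (c : ℝ) (f : E → ℝ) (p w : E) :
    fderiv ℝ (fun q => c * f q) p w = c * fderiv ℝ f p w :=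
  DFunLike.congr_fun (congrFun (fderiv_const_smul_field (𝕜 := ℝ) (f := f) c) p) w

lemma fderiv_fderiv_apply_nonpos_of_isLocalMax (hf : ContDiffAt ℝ 2 f p) (h : IsLocalMax f p)
    (w : E) : fderiv ℝ (fun q => fderiv ℝ f q w) p w ≤ 0 := by
  set γ : ℝ → E := fun r => p + r • w
  have hγ (r : ℝ) : HasDerivAt γ w r := by
    simpa [γ] using ((hasDerivAt_id r).smul_const w).const_add p
  have hγ₀ : γ 0 = p := by simp [γ]
  have hγ_tendsto : Tendsto γ (𝓝 0) (𝓝 p) := hγ₀ ▸ (hγ 0).continuousAt.tendsto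
  have h_deriv : ∀ᶠ r in 𝓝 0, HasDerivAt (f ∘ γ) (fderiv ℝ f (γ r) w) r := by
    filter_upwards [hγ_tendsto.eventually (hf.eventually (by simp))] with r hr
    exact (hr.differentiableAt two_ne_zero).hasFDerivAt.comp_hasDerivAt r (hγ r)
  have h_deriv₂ : HasDerivAt (fun r => fderiv ℝ f (γ r) w)
      (fderiv ℝ (fun q => fderiv ℝ f q w) p w) 0 :=
    (differentiableAt_fderiv_apply hf w).hasFDerivAt.comp_hasDerivAt_of_eq 0 (hγ 0) hγ₀.symm
  have h_max : IsLocalMax (f ∘ γ) 0 := by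
    filter_upwards [hγ_tendsto.eventually h] with r hr
    simpa [hγ₀] using hr
  rw [← h_deriv₂.deriv,
    ← EventuallyEq.deriv_eq (h_deriv.mono fun _ hr => hr.deriv : deriv (f ∘ γ) =ᶠ[𝓝 0] _)]
  exact deriv_deriv_nonpos_of_isLocalMax h_max h_deriv.self_of_nhds.continuousAt

lemma le_of_hasDerivWithinAt_of_isMaxOn_sub_mul {g : ℝ → ℝ} {g' c b τ : ℝ} (hb : b < τ)
    (hg : HasDerivWithinAt g g' (Ioc b τ) τ)
    (h : IsMaxOn (fun t => g t - c * t) (Ioc b τ) τ) : c ≤ g' := by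
  have h_deriv : HasDerivWithinAt (fun t => g t - c * t) (g' - c) (Ioc b τ) τ := by
    simpa using hg.fun_sub ((hasDerivWithinAt_id τ _).const_mul c)
  have h_dir : (b - τ) / 2 ∈ posTangentConeAt (Ioc b τ) τ := by
    apply mem_posTangentConeAt_of_segment_subset
    rw [segment_symm, segment_eq_Icc (by linarith)]
    exact fun t ht => ⟨by linarith [ht.1], ht.2⟩
  have := h.localize.hasFDerivWithinAt_nonpos h_deriv.hasFDerivWithinAt h_dir
  simp only [ContinuousLinearMap.toSpanSingleton_apply, smul_eq_mul] at this
  nlinarith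

lemma eventually_lt_of_deriv_pos_nhdsGT {f : ℝ → ℝ} {b : ℝ}
    (hf : ContinuousWithinAt f (Ioi b) b) (hd : ∀ᶠ y in 𝓝[>] b, 0 < deriv f y) :
    ∀ᶠ y in 𝓝[>] b, f b < f y := by
  obtain ⟨c, hbc, hc⟩ := mem_nhdsGT_iff_exists_Ioc_subset.1 hd
  have h_cont : ContinuousOn f (Icc b c) := fun y hy => by
    rcases hy.1.eq_or_lt with rfl | hby
    · exact (continuousWithinAt_Ioi_iff_Ici.1 hf).mono Icc_subset_Ici_self
    · exact (differentiableAt_of_deriv_ne_zero (hc ⟨hby, hy.2⟩).ne').continuousAt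
        |>.continuousWithinAt
  have h_mono : StrictMonoOn f (Icc b c) := strictMonoOn_of_deriv_pos (convex_Icc b c) h_cont
    fun y hy => hc (Ioo_subset_Ioc_self (interior_Icc (a := b) ▸ hy))
  filter_upwards [Ioc_mem_nhdsGT hbc] with y hy
  exact h_mono (left_mem_Icc.2 hbc.le) (Ioc_subset_Icc_self hy) hy.1

end LocalMax

section ALaplacian

/-- The operator `Δu + (a/y) ∂_y u` whose zeros are the `a`-harmonic functions. -/
def aLaplacian {n : ℕ} (a : ℝ) (u : En n × ℝ → ℝ) (p : En n × ℝ) : ℝ :=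
  lap u p + (a / p.2) * fderiv ℝ u p (0, 1)

variable {n : ℕ} {f g : En n × ℝ → ℝ} {p : En n × ℝ}

lemma D2_add (hf : ContDiffAt ℝ 2 f p) (hg : ContDiffAt ℝ 2 g p) (w : En n × ℝ) :
    D2 (fun q => f q + g q) p w = D2 f p w + D2 g p w := by
  have h_fderiv : (fun q => fderiv ℝ (fun q => f q + g q) q w) =ᶠ[𝓝 p]
      fun q => fderiv ℝ f q w + fderiv ℝ g q w := by
    filter_upwards [hf.eventually (by simp), hg.eventually (by simp)] with q hfq hgq
    rw [fderiv_fun_add (hfq.differentiableAt two_ne_zero) (hgq.differentiableAt two_ne_zero),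
      add_apply]
  rw [D2, h_fderiv.fderiv_eq, fderiv_fun_add (differentiableAt_fderiv_apply hf w)
    (differentiableAt_fderiv_apply hg w), add_apply, D2, D2]

lemma D2_const_mul (c : ℝ) (w : En n × ℝ) : D2 (fun q => c * f q) p w = c * D2 f p w := by
  simp only [D2, fderiv_const_mul_apply]

lemma aLaplacian_add (a : ℝ) (hf : ContDiffAt ℝ 2 f p) (hg : ContDiffAt ℝ 2 g p) :
    aLaplacian a (fun q => f q + g q) p = aLaplacian a f p + aLaplacian a g p := by
  simp only [aLaplacian, lap, D2_add hf hg, Finset.sum_add_distrib,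
    fderiv_fun_add (hf.differentiableAt two_ne_zero) (hg.differentiableAt two_ne_zero),
    add_apply]
  ring

lemma aLaplacian_const_mul (a c : ℝ) :
    aLaplacian a (fun q => c * f q) p = c * aLaplacian a f p := by
  simp only [aLaplacian, lap, D2_const_mul, fderiv_const_mul_apply, ← Finset.mul_sum]
  ring

lemma aLaplacian_nonpos_of_isLocalMax (a : ℝ) (hf : ContDiffAt ℝ 2 f p) (h : IsLocalMax f p) :
    aLaplacian a f p ≤ 0 := by
  have h_D2 (w : En n × ℝ) : D2 f p w ≤ 0 := fderiv_fderiv_apply_nonpos_of_isLocalMax hf h w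
  have h_lap : lap f p ≤ 0 :=
    add_nonpos (Finset.sum_nonpos fun _ _ => h_D2 _) (h_D2 _)
  simpa [aLaplacian, h.fderiv_eq_zero] using h_lap

lemma hasFDerivAt_snd_rpow (β : ℝ) (hp : 0 < p.2) :
    HasFDerivAt (fun q : En n × ℝ => q.2 ^ β)
      ((β * p.2 ^ (β - 1)) • ContinuousLinearMap.snd ℝ (En n) ℝ) p :=
  (Real.hasDerivAt_rpow_const (Or.inl hp.ne')).comp_hasFDerivAt p hasFDerivAt_snd

lemma contDiffAt_snd_rpow (β : ℝ) (hp : 0 < p.2) :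
    ContDiffAt ℝ 2 (fun q : En n × ℝ => q.2 ^ β) p :=
  contDiffAt_snd.rpow_const_of_ne hp.ne'

lemma D2_snd_rpow (β : ℝ) (hp : 0 < p.2) (w : En n × ℝ) :
    D2 (fun q => q.2 ^ β) p w = β * (β - 1) * p.2 ^ (β - 1 - 1) * w.2 ^ 2 := by
  have h_fderiv : (fun q : En n × ℝ => fderiv ℝ (fun q => q.2 ^ β) q w) =ᶠ[𝓝 p]
      fun q => β * q.2 ^ (β - 1) * w.2 := by
    filter_upwards [continuousAt_snd.eventually (lt_mem_nhds hp)] with q hq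
    simp [(hasFDerivAt_snd_rpow β hq).fderiv]
  rw [D2, h_fderiv.fderiv_eq,
    (((hasFDerivAt_snd_rpow (β - 1) hp).const_mul β).mul_const w.2).fderiv]
  simp only [smul_apply, ContinuousLinearMap.coe_snd', smul_eq_mul]
  ring

lemma aLaplacian_snd_rpow (a β : ℝ) (hp : 0 < p.2) :
    aLaplacian a (fun q : En n × ℝ => q.2 ^ β) p = β * (β - 1 + a) * p.2 ^ (β - 2) := by
  simp only [aLaplacian, lap, D2_snd_rpow β hp, (hasFDerivAt_snd_rpow β hp).fderiv]
  rw [show β - 2 = β - 1 - 1 by ring, Real.rpow_sub_one hp.ne' (β - 1)]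
  simp only [ne_eq, OfNat.ofNat_ne_zero, not_false_eq_true, zero_pow, mul_zero,
    Finset.sum_const_zero, one_pow, mul_one, zero_add, smul_apply, ContinuousLinearMap.coe_snd',
    smul_eq_mul]
  ring

end ALaplacian

section HalfBall

variable {n : ℕ} {r : ℝ} {p : En n × ℝ}

lemma isOpen_halfBall (n : ℕ) (r : ℝ) : IsOpen (halfBall n r) :=
  .and (isOpen_lt (by fun_prop) (by fun_prop)) (isOpen_lt (by fun_prop) (by fun_prop))

lemma norm_fst_le_of_mem_closedHalfBall (hp : p ∈ closedHalfBall n r) : ‖p.1‖ ≤ |r| :=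
  abs_norm p.1 ▸ sq_le_sq.1 (by linarith [hp.1, sq_nonneg p.2])

lemma snd_le_of_mem_closedHalfBall (hp : p ∈ closedHalfBall n r) : p.2 ≤ |r| :=
  abs_of_nonneg hp.2 ▸ sq_le_sq.1 (by linarith [hp.1, sq_nonneg ‖p.1‖])

lemma isCompact_closedHalfBall (n : ℕ) (r : ℝ) : IsCompact (closedHalfBall n r) := by
  have h_closed : IsClosed (closedHalfBall n r) :=
    .and (isClosed_le (by fun_prop) (by fun_prop)) (isClosed_le (by fun_prop) (by fun_prop))
  refine ((isCompact_closedBall (0 : En n) |r|).prod (isCompact_Icc (a := 0) (b := |r|)))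
    |>.of_isClosed_subset h_closed fun p hp => ⟨?_, hp.2, snd_le_of_mem_closedHalfBall hp⟩
  simpa using norm_fst_le_of_mem_closedHalfBall hp

lemma halfBall_subset_closedHalfBall (n : ℕ) (r : ℝ) : halfBall n r ⊆ closedHalfBall n r :=
  fun _ hp => ⟨hp.1.le, hp.2.le⟩

lemma closedSpherePlus_subset_closedHalfBall (n : ℕ) : closedSpherePlus n ⊆ closedHalfBall n 1 :=
  fun _ hp => ⟨by simpa using hp.1.le, hp.2⟩

lemma mk_zero_mem_closedHalfBall {x : En n} (hx : x ∈ flatBall n r) :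
    (x, (0 : ℝ)) ∈ closedHalfBall n r :=
  ⟨by simpa using pow_le_pow_left₀ (norm_nonneg x) (le_of_lt hx) 2, le_rfl⟩

lemma eventually_mem_halfBall {x : En n} (hx : x ∈ flatBall n r) :
    ∀ᶠ y : ℝ in 𝓝[>] 0, (x, y) ∈ halfBall n r := by
  have h_cont : Continuous fun y : ℝ => ‖x‖ ^ 2 + y ^ 2 := by fun_prop
  have h_lt : ‖x‖ ^ 2 + 0 ^ 2 < r ^ 2 := by
    simpa using pow_lt_pow_left₀ hx (norm_nonneg x) two_ne_zero
  filter_upwards [h_cont.continuousAt.continuousWithinAt.eventually (gt_mem_nhds h_lt),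
    self_mem_nhdsWithin] with y hy hy₀ using ⟨hy, hy₀⟩

end HalfBall

section Solutions

variable {n : ℕ} {a : ℝ}

namespace IsAHarmonicOn

variable {f g : En n × ℝ → ℝ} {Ω : Set (En n × ℝ)}

lemma contDiffAt (hf : IsAHarmonicOn a f Ω) (hΩ : IsOpen Ω) {p : En n × ℝ} (hp : p ∈ Ω) :
    ContDiffAt ℝ 2 f p :=
  hf.1.contDiffAt (hΩ.mem_nhds hp)

lemma add (hf : IsAHarmonicOn a f Ω) (hg : IsAHarmonicOn a g Ω) (hΩ : IsOpen Ω) :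
    IsAHarmonicOn a (fun q => f q + g q) Ω := by
  refine ⟨hf.1.add hg.1, fun p hp => ?_⟩
  calc aLaplacian a (fun q => f q + g q) p = aLaplacian a f p + aLaplacian a g p :=
        aLaplacian_add a (hf.contDiffAt hΩ hp) (hg.contDiffAt hΩ hp)
    _ = 0 + 0 := congrArg₂ _ (hf.2 p hp) (hg.2 p hp)
    _ = 0 := add_zero 0

lemma const_mul (c : ℝ) (hf : IsAHarmonicOn a f Ω) : IsAHarmonicOn a (fun q => c * f q) Ω := by
  refine ⟨contDiffOn_const.mul hf.1, fun p hp => ?_⟩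
  calc aLaplacian a (fun q => c * f q) p = c * aLaplacian a f p := aLaplacian_const_mul a c
    _ = c * 0 := congrArg _ (hf.2 p hp)
    _ = 0 := mul_zero c

lemma not_isLocalMax_add_mul_snd_rpow (hf : IsAHarmonicOn a f Ω) (hΩ : IsOpen Ω) {η β : ℝ}
    (hη : 0 < η) (hβ : 0 < β * (β - 1 + a)) {p : En n × ℝ} (hp : p ∈ Ω) (hp₀ : 0 < p.2) :
    ¬ IsLocalMax (fun q => f q + η * q.2 ^ β) p := by
  intro h_max
  have hf₂ := hf.contDiffAt hΩ hp
  have hg₂ : ContDiffAt ℝ 2 (fun q : En n × ℝ => η * q.2 ^ β) p :=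
    contDiffAt_const.mul (contDiffAt_snd_rpow β hp₀)
  have h_eq : aLaplacian a (fun q => f q + η * q.2 ^ β) p =
      η * (β * (β - 1 + a) * p.2 ^ (β - 2)) := by
    rw [aLaplacian_add a hf₂ hg₂, aLaplacian_const_mul, aLaplacian_snd_rpow a β hp₀,
      show aLaplacian a f p = 0 from hf.2 p hp, zero_add]
  have h_pos : 0 < η * (β * (β - 1 + a) * p.2 ^ (β - 2)) := by positivity
  exact h_pos.not_ge (h_eq ▸ aLaplacian_nonpos_of_isLocalMax a (hf₂.add hg₂) h_max)

end IsAHarmonicOn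

lemma fderiv_const_add_inner_fst_apply (c : ℝ) (e : En n) (p w : En n × ℝ) :
    fderiv ℝ (fun q : En n × ℝ => c + ⟪e, q.1⟫) p w = ⟪e, w.1⟫ := by
  have h := ((innerSL ℝ e).comp (ContinuousLinearMap.fst ℝ (En n) ℝ)).hasFDerivAt (x := p)
  exact DFunLike.congr_fun (h.const_add c).fderiv w

lemma isAHarmonicOn_const_add_inner_fst (a c : ℝ) (e : En n) (Ω : Set (En n × ℝ)) :
    IsAHarmonicOn a (fun q => c + ⟪e, q.1⟫) Ω := by
  refine ⟨contDiffOn_const.add (contDiffOn_const.inner ℝ contDiffOn_fst), fun p _ => ?_⟩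
  simp only [lap, D2, fderiv_const_add_inner_fst_apply]
  simp

lemma isAHarmonicOn_snd_rpow {β : ℝ} (hβ : a + β = 1) {Ω : Set (En n × ℝ)}
    (hΩ : ∀ p ∈ Ω, 0 < p.2) : IsAHarmonicOn a (fun q => q.2 ^ β) Ω := by
  refine ⟨fun p hp => (contDiffAt_snd_rpow β (hΩ p hp)).contDiffWithinAt, fun p hp => ?_⟩
  calc aLaplacian a (fun q => q.2 ^ β) p = β * (β - 1 + a) * p.2 ^ (β - 2) :=
        aLaplacian_snd_rpow a β (hΩ p hp)
    _ = 0 := by rw [show β - 1 + a = 0 by linarith, mul_zero, zero_mul]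

namespace IsFracHeatSolution

variable {u v : ℝ → En n × ℝ → ℝ}

lemma isAHarmonicOn (hu : IsFracHeatSolution a u) {t : ℝ} (ht : t ∈ Icc (-1) 0) :
    IsAHarmonicOn a (u t) (halfBall n 1) :=
  hu.2.1 t ht

lemma hasDerivWithinAt (hu : IsFracHeatSolution a u) {t : ℝ} (ht : t ∈ Ioc (-1) 0) {x : En n}
    (hx : x ∈ flatBall n 1) :
    HasDerivWithinAt (fun τ => u τ (x, 0)) (derivWithin (fun τ => u τ (x, 0)) (Ioc (-1) 0) t)
      (Ioc (-1) 0) t :=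
  (hu.2.2 t ht x hx).1.hasDerivWithinAt

lemma normalDerivLimit (hu : IsFracHeatSolution a u) {t : ℝ} (ht : t ∈ Ioc (-1) 0) {x : En n}
    (hx : x ∈ flatBall n 1) :
    NormalDerivLimit a (u t) x (derivWithin (fun τ => u τ (x, 0)) (Ioc (-1) 0) t) :=
  (hu.2.2 t ht x hx).2

lemma eventually_differentiableAt (hu : IsFracHeatSolution a u) {t : ℝ} (ht : t ∈ Ioc (-1) 0)
    {x : En n} (hx : x ∈ flatBall n 1) :
    ∀ᶠ y : ℝ in 𝓝[>] 0, DifferentiableAt ℝ (u t) (x, y) := by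
  filter_upwards [eventually_mem_halfBall hx] with y hy
  exact ((hu.isAHarmonicOn (Ioc_subset_Icc_self ht)).contDiffAt
    (isOpen_halfBall n 1) hy).differentiableAt two_ne_zero

lemma of_hasDerivWithinAt
    (h_cont : ContinuousOn (fun q : ℝ × (En n × ℝ) => u q.1 q.2) (Icc (-1) 0 ×ˢ closedHalfBall n 1))
    (h_harm : ∀ t ∈ Icc (-1 : ℝ) 0, IsAHarmonicOn a (u t) (halfBall n 1))
    (h_bdry : ∀ t ∈ Ioc (-1 : ℝ) 0, ∀ x ∈ flatBall n 1, ∃ L,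
      HasDerivWithinAt (fun τ => u τ (x, 0)) L (Ioc (-1) 0) t ∧ NormalDerivLimit a (u t) x L) :
    IsFracHeatSolution a u := by
  refine ⟨h_cont, h_harm, fun t ht x hx => ?_⟩
  obtain ⟨L, hL, hL'⟩ := h_bdry t ht x hx
  exact ⟨hL.differentiableWithinAt, (hL.derivWithin (uniqueDiffOn_Ioc _ _ t ht)).symm ▸ hL'⟩

lemma add (hu : IsFracHeatSolution a u) (hv : IsFracHeatSolution a v) :
    IsFracHeatSolution a (fun t p => u t p + v t p) := by
  refine .of_hasDerivWithinAt (hu.1.add hv.1)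
    (fun t ht => (hu.isAHarmonicOn ht).add (hv.isAHarmonicOn ht) (isOpen_halfBall n 1))
    fun t ht x hx => ⟨_, (hu.hasDerivWithinAt ht hx).add (hv.hasDerivWithinAt ht hx), ?_⟩
  refine ((hu.normalDerivLimit ht hx).add (hv.normalDerivLimit ht hx)).congr' ?_
  filter_upwards [hu.eventually_differentiableAt ht hx, hv.eventually_differentiableAt ht hx]
    with y hy hy'
  rw [fderiv_fun_add hy hy', add_apply, mul_add]

lemma const_mul (c : ℝ) (hu : IsFracHeatSolution a u) :
    IsFracHeatSolution a (fun t p => c * u t p) := by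
  refine .of_hasDerivWithinAt (continuousOn_const.mul hu.1)
    (fun t ht => (hu.isAHarmonicOn ht).const_mul c)
    fun t ht x hx => ⟨_, (hu.hasDerivWithinAt ht hx).const_mul c, ?_⟩
  simpa only [NormalDerivLimit, fderiv_const_mul_apply, mul_left_comm] using
    (hu.normalDerivLimit ht hx).const_mul c

end IsFracHeatSolution

lemma isFracHeatSolution_const_add_inner_fst (a c : ℝ) (e : En n) :
    IsFracHeatSolution a (fun _ p => c + ⟪e, p.1⟫) := by
  refine .of_hasDerivWithinAt (by fun_prop)
    (fun _ _ => isAHarmonicOn_const_add_inner_fst a c e _)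
    fun _ _ _ _ => ⟨0, hasDerivWithinAt_const .., ?_⟩
  simp only [NormalDerivLimit, fderiv_const_add_inner_fst_apply]
  simp

lemma isFracHeatSolution_const (a c : ℝ) :
    IsFracHeatSolution a (fun (_ : ℝ) (_ : En n × ℝ) => c) := by
  simpa using isFracHeatSolution_const_add_inner_fst a c (0 : En n)

lemma isFracHeatSolution_time_add_snd_rpow {s : ℝ} (hs : 0 < s) :
    IsFracHeatSolution (1 - 2 * s) fun t (p : En n × ℝ) => t + (2 * s)⁻¹ * p.2 ^ (2 * s) := by
  refine .of_hasDerivWithinAt ?_ (fun t _ => ?_) fun t _ x _ => ⟨1, ?_, ?_⟩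
  · have h_rpow : Continuous fun q : ℝ × (En n × ℝ) => q.2.2 ^ (2 * s) :=
      Continuous.rpow_const (by fun_prop) fun _ => Or.inr (by positivity)
    fun_prop
  · have h_rpow : IsAHarmonicOn (1 - 2 * s) (fun q : En n × ℝ => q.2 ^ (2 * s)) (halfBall n 1) :=
      isAHarmonicOn_snd_rpow (by ring) fun _ hp => hp.2
    simpa using (isAHarmonicOn_const_add_inner_fst _ t 0 _).add (h_rpow.const_mul (2 * s)⁻¹)
      (isOpen_halfBall n 1)
  · exact (hasDerivWithinAt_id t _).add_const _
  · refine tendsto_const_nhds.congr' ?_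
    filter_upwards [self_mem_nhdsWithin] with y (hy : 0 < y)
    rw [(((hasFDerivAt_snd_rpow (p := (x, y)) (2 * s) hy).const_mul _).const_add t).fderiv]
    have h_inv : y ^ (1 - 2 * s) * y ^ (2 * s - 1) = 1 := by rw [← Real.rpow_add hy]; simp
    simp only [mul_inv_rev, smul_apply, ContinuousLinearMap.coe_snd', smul_eq_mul, mul_one]
    field_simp
    exact h_inv.symm

end Solutions

section MaximumPrinciple

/-- The parabolic boundary of the cylinder `[-1, t₀] × closure(B_1^+)`: its bottom together with
the upper part of its lateral boundary. The flat part `B_1^0` is not included, since the equation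
itself prescribes the normal derivative there. -/
def parabolicBoundary (n : ℕ) (t₀ : ℝ) : Set (ℝ × (En n × ℝ)) :=
  {-1} ×ˢ closedHalfBall n 1 ∪ Icc (-1) t₀ ×ˢ closedSpherePlus n

variable {n : ℕ} {a t₀ : ℝ} {u v w : ℝ → En n × ℝ → ℝ}

lemma parabolicBoundary_subset (ht₀ : -1 ≤ t₀) :
    parabolicBoundary n t₀ ⊆ Icc (-1) t₀ ×ˢ closedHalfBall n 1 :=
  union_subset (prod_mono (singleton_subset_iff.2 (left_mem_Icc.2 ht₀)) subset_rfl)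
    (prod_mono subset_rfl (closedSpherePlus_subset_closedHalfBall n))

lemma mem_parabolicBoundary_or_norm_sq_add_sq_lt {q : ℝ × (En n × ℝ)}
    (hq : q ∈ Icc (-1) t₀ ×ˢ closedHalfBall n 1) :
    q ∈ parabolicBoundary n t₀ ∨ -1 < q.1 ∧ ‖q.2.1‖ ^ 2 + q.2.2 ^ 2 < 1 ^ 2 := by
  obtain ⟨ht, hp⟩ := hq
  rcases ht.1.eq_or_lt with ht₁ | ht₁
  · exact Or.inl (Or.inl ⟨ht₁.symm, hp⟩)
  rcases hp.1.eq_or_lt with hp₁ | hp₁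
  · exact Or.inl (Or.inr ⟨ht, by simpa using hp₁, hp.2⟩)
  · exact Or.inr ⟨ht₁, hp₁⟩

namespace IsFracHeatSolution

lemma eventually_lt_of_isMaxOn_time (hv : IsFracHeatSolution a v) {η τ : ℝ} (hη : 0 < η)
    (hτ : τ ∈ Ioc (-1) 0) {x : En n} (hx : x ∈ flatBall n 1)
    (h_max : IsMaxOn (fun t => v t (x, 0) - η * t) (Ioc (-1) τ) τ) :
    ∀ᶠ y in 𝓝[>] 0, v τ (x, 0) < v τ (x, y) := by
  have h_deriv_pos : 0 < derivWithin (fun t => v t (x, 0)) (Ioc (-1) 0) τ :=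
    hη.trans_le <| le_of_hasDerivWithinAt_of_isMaxOn_sub_mul hτ.1
      ((hv.hasDerivWithinAt hτ hx).mono (Ioc_subset_Ioc_right hτ.2)) h_max
  have h_mem : ∀ᶠ y : ℝ in 𝓝[>] 0, (x, y) ∈ halfBall n 1 := eventually_mem_halfBall hx
  refine eventually_lt_of_deriv_pos_nhdsGT (f := fun y => v τ (x, y)) ?_ ?_
  · have h_mem₀ : (τ, (x, (0 : ℝ))) ∈ Icc (-1) 0 ×ˢ closedHalfBall n 1 :=
      ⟨Ioc_subset_Icc_self hτ, mk_zero_mem_closedHalfBall hx⟩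
    have h_line : Continuous fun y : ℝ => (τ, (x, y)) := by fun_prop
    refine Tendsto.comp (g := fun q : ℝ × (En n × ℝ) => v q.1 q.2) (hv.1 _ h_mem₀)
      (tendsto_nhdsWithin_iff.2 ⟨h_line.continuousWithinAt, ?_⟩)
    filter_upwards [h_mem] with y hy
    exact ⟨Ioc_subset_Icc_self hτ, halfBall_subset_closedHalfBall n 1 hy⟩
  · filter_upwards [(hv.normalDerivLimit hτ hx).eventually (lt_mem_nhds h_deriv_pos),
      hv.eventually_differentiableAt hτ hx, self_mem_nhdsWithin] with y h_pos h_diff hy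
    have h_deriv : HasDerivAt (fun z => v τ (x, z)) (fderiv ℝ (v τ) (x, y) (0, 1)) y :=
      h_diff.hasFDerivAt.comp_hasDerivAt y ((hasDerivAt_const y x).prodMk (hasDerivAt_id y))
    rw [h_deriv.deriv]
    exact pos_of_mul_pos_right h_pos (Real.rpow_nonneg (le_of_lt hy) a)

lemma not_isMaxOn_base (hv : IsFracHeatSolution a v) (ht₀ : t₀ ≤ 0) {η β : ℝ} (hη : 0 < η)
    (hβ : 0 < β) {τ : ℝ} (hτ : τ ∈ Ioc (-1) t₀) {x : En n} (hx : x ∈ flatBall n 1) :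
    ¬ IsMaxOn (fun q => v q.1 q.2 + η * q.2.2 ^ β - η * q.1)
      (Icc (-1) t₀ ×ˢ closedHalfBall n 1) (τ, (x, 0)) := by
  intro h_max
  have h_base : (x, (0 : ℝ)) ∈ closedHalfBall n 1 := mk_zero_mem_closedHalfBall hx
  have h_time : IsMaxOn (fun t => v t (x, 0) - η * t) (Ioc (-1) τ) τ := fun t ht => by
    simpa [hβ.ne'] using h_max (show (t, (x, 0)) ∈ _ from ⟨⟨ht.1.le, ht.2.trans hτ.2⟩, h_base⟩)
  obtain ⟨z, hz_lt, hz_mem⟩ := ((hv.eventually_lt_of_isMaxOn_time hη ⟨hτ.1, hτ.2.trans ht₀⟩ hx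
    h_time).and (eventually_mem_halfBall hx)).exists
  have h_le : v τ (x, z) + η * z ^ β ≤ v τ (x, 0) := by
    simpa [hβ.ne'] using h_max (show (τ, (x, z)) ∈ _ from
      ⟨Ioc_subset_Icc_self hτ, halfBall_subset_closedHalfBall n 1 hz_mem⟩)
  have h_pos : 0 < η * z ^ β := mul_pos hη (Real.rpow_pos_of_pos hz_mem.2 β)
  linarith

/-- Adding `η y ^ β` excludes interior maxima, and subtracting `η t` excludes maxima on the base. -/
lemma exists_mem_parabolicBoundary_isMaxOn (hv : IsFracHeatSolution a v) (ht₀ : t₀ ∈ Icc (-1) 0)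
    {η β : ℝ} (hη : 0 < η) (hβ₀ : 0 < β) (hβ : 0 < β * (β - 1 + a)) :
    ∃ q ∈ parabolicBoundary n t₀, IsMaxOn (fun q => v q.1 q.2 + η * q.2.2 ^ β - η * q.1)
      (Icc (-1) t₀ ×ˢ closedHalfBall n 1) q := by
  have h_cont : ContinuousOn (fun q : ℝ × (En n × ℝ) => v q.1 q.2 + η * q.2.2 ^ β - η * q.1)
      (Icc (-1) t₀ ×ˢ closedHalfBall n 1) := by
    have h_rpow : Continuous fun q : ℝ × (En n × ℝ) => q.2.2 ^ β :=
      Continuous.rpow_const (by fun_prop) fun _ => Or.inr hβ₀.le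
    exact ((hv.1.mono (prod_mono_left (Icc_subset_Icc_right ht₀.2))).add
      (h_rpow.const_mul η).continuousOn).sub (by fun_prop)
  have h_nonempty : (Icc (-1) t₀ ×ˢ closedHalfBall n 1).Nonempty :=
    ⟨(-1, 0), left_mem_Icc.2 ht₀.1, by simp [closedHalfBall]⟩
  obtain ⟨⟨τ, x, y⟩, h_mem, h_max⟩ :=
    (isCompact_Icc.prod (isCompact_closedHalfBall n 1)).exists_isMaxOn h_nonempty h_cont
  refine ⟨(τ, x, y), ?_, h_max⟩
  obtain h_bdry | ⟨hτ, hxy⟩ := mem_parabolicBoundary_or_norm_sq_add_sq_lt h_mem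
  · exact h_bdry
  exfalso
  rcases h_mem.2.2.eq_or_lt with (rfl : 0 = y) | (hy : 0 < y)
  · have hx : x ∈ flatBall n 1 :=
      (sq_lt_sq₀ (norm_nonneg x) zero_le_one).1 (by simpa using hxy)
    exact hv.not_isMaxOn_base ht₀.2 hη hβ₀ ⟨hτ, h_mem.1.2⟩ hx h_max
  · have h_local : IsLocalMax (fun p => v τ p + η * p.2 ^ β) (x, y) := by
      filter_upwards [(isOpen_halfBall n 1).mem_nhds ⟨hxy, hy⟩] with p hp
      simpa using
        h_max (show (τ, p) ∈ _ from ⟨h_mem.1, halfBall_subset_closedHalfBall n 1 hp⟩)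
    exact (hv.isAHarmonicOn ⟨hτ.le, h_mem.1.2.trans ht₀.2⟩).not_isLocalMax_add_mul_snd_rpow
      (isOpen_halfBall n 1) hη hβ ⟨hxy, hy⟩ hy h_local

theorem le_of_forall_parabolicBoundary_le (hv : IsFracHeatSolution a v) (ht₀ : t₀ ≤ 0) {M : ℝ}
    (h_bdry : ∀ q ∈ parabolicBoundary n t₀, v q.1 q.2 ≤ M) {t : ℝ} (ht : t ∈ Icc (-1) t₀)
    {p : En n × ℝ} (hp : p ∈ closedHalfBall n 1) : v t p ≤ M := by
  refine le_of_forall_pos_le_add fun ε hε => ?_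
  have hβ : 0 < (|a| + 2) * (|a| + 2 - 1 + a) :=
    mul_pos (by positivity) (by linarith [neg_abs_le a])
  have h_bot : -1 ≤ t₀ := ht.1.trans ht.2
  obtain ⟨q, hq, h_max⟩ := hv.exists_mem_parabolicBoundary_isMaxOn ⟨h_bot, ht₀⟩
    (half_pos hε) (by positivity) hβ
  have h_le : v t p + ε / 2 * p.2 ^ (|a| + 2) - ε / 2 * t ≤
      v q.1 q.2 + ε / 2 * q.2.2 ^ (|a| + 2) - ε / 2 * q.1 := h_max (show (t, p) ∈ _ from ⟨ht, hp⟩)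
  obtain ⟨hq_time, hq_mem⟩ := parabolicBoundary_subset h_bot hq
  have hq_rpow : q.2.2 ^ (|a| + 2) ≤ 1 :=
    Real.rpow_le_one hq_mem.2 (by simpa using snd_le_of_mem_closedHalfBall hq_mem) (by positivity)
  have hp_rpow : 0 ≤ p.2 ^ (|a| + 2) := Real.rpow_nonneg hp.2 _
  nlinarith [h_bdry q hq, hq_time.1, ht.2, mul_nonneg hε.le hp_rpow]

theorem le_of_forall_parabolicBoundary_le_solution (hu : IsFracHeatSolution a u)
    (hw : IsFracHeatSolution a w) (ht₀ : t₀ ≤ 0)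
    (h_bdry : ∀ q ∈ parabolicBoundary n t₀, u q.1 q.2 ≤ w q.1 q.2) {t : ℝ}
    (ht : t ∈ Icc (-1) t₀) {p : En n × ℝ} (hp : p ∈ closedHalfBall n 1) : u t p ≤ w t p := by
  have h := (hu.add (hw.const_mul (-1))).le_of_forall_parabolicBoundary_le ht₀ (M := 0)
    (fun q hq => by linarith [h_bdry q hq]) ht hp
  linarith

theorem abs_le_of_forall_parabolicBoundary_abs_le (hu : IsFracHeatSolution a u)
    (hw : IsFracHeatSolution a w) (ht₀ : t₀ ≤ 0)
    (h_bdry : ∀ q ∈ parabolicBoundary n t₀, |u q.1 q.2| ≤ w q.1 q.2) {t : ℝ}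
    (ht : t ∈ Icc (-1) t₀) {p : En n × ℝ} (hp : p ∈ closedHalfBall n 1) : |u t p| ≤ w t p := by
  refine abs_le'.2 ⟨?_, ?_⟩
  · exact hu.le_of_forall_parabolicBoundary_le_solution hw ht₀
      (fun q hq => (le_abs_self _).trans (h_bdry q hq)) ht hp
  · have h := (hu.const_mul (-1)).le_of_forall_parabolicBoundary_le_solution hw ht₀
      (fun q hq => by simpa using (neg_le_abs _).trans (h_bdry q hq)) ht hp
    simpa using h

end IsFracHeatSolution

end MaximumPrinciple


section Barrier

/-- The quantity `|x - x₀|² + y^{1-a} + (t₀ - t)`, with `1 - a = 2s`, which measures how far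
`(t, x, y)` is from `(t₀, x₀, 0)`. -/
def parabolicGauge {n : ℕ} (s : ℝ) (x₀ : En n) (t₀ t : ℝ) (p : En n × ℝ) : ℝ :=
  ‖p.1 - x₀‖ ^ 2 + p.2 ^ (2 * s) + (t₀ - t)

/-- Twice the signed distance from `x` to the hyperplane tangent to the unit sphere at `x₀`. -/
def tangentGap {E : Type*} [NormedAddCommGroup E] [InnerProductSpace ℝ E] (x₀ x : E) : ℝ :=
  2 * (1 - ⟪x₀, x⟫)

/-- An affine function of the solutions `⟪x₀, x⟫` and `t + y^{2s}/(2s)` which dominates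
`parabolicGauge ^ α`. The scales `δ` and `ε` at which the powers are linearized are free. -/
def barrier {n : ℕ} (s α : ℝ) (x₀ : En n) (t₀ ε δ t : ℝ) (p : En n × ℝ) : ℝ :=
  rpowTangent α ε ((5 + (2 * s)⁻¹) * rpowTangent s δ (tangentGap x₀ p.1)
    - (2 * s)⁻¹ * p.2 ^ (2 * s) + (t₀ - t))

lemma tangentGap_le_two_mul_norm_sub {E : Type*} [NormedAddCommGroup E] [InnerProductSpace ℝ E]
    {x₀ : E} (hx₀ : ‖x₀‖ = 1) (x : E) :
    tangentGap x₀ x ≤ 2 * ‖x - x₀‖ := by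
  have h_eq : tangentGap x₀ x = 2 * ⟪x₀, x₀ - x⟫ := by
    rw [tangentGap, inner_sub_right, real_inner_self_eq_norm_sq, hx₀, one_pow]
  have h_inner : ⟪x₀, x₀ - x⟫ ≤ ‖x - x₀‖ := by
    simpa [hx₀, norm_sub_rev] using real_inner_le_norm x₀ (x₀ - x)
  linarith

variable {n : ℕ} {s α : ℝ} {x₀ : En n} {t₀ t : ℝ} {p : En n × ℝ}

lemma norm_sub_sq_add_sq_le_tangentGap (hx₀ : ‖x₀‖ = 1) (hp : p ∈ closedHalfBall n 1) :
    ‖p.1 - x₀‖ ^ 2 + p.2 ^ 2 ≤ tangentGap x₀ p.1 := by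
  rw [norm_sub_sq_real, real_inner_comm, hx₀, tangentGap]
  linarith [hp.1]

lemma norm_sub_le_two (hx₀ : ‖x₀‖ = 1) (hp : p ∈ closedHalfBall n 1) : ‖p.1 - x₀‖ ≤ 2 :=
  calc ‖p.1 - x₀‖ ≤ ‖p.1‖ + ‖x₀‖ := norm_sub_le _ _
    _ ≤ |1| + 1 := add_le_add (norm_fst_le_of_mem_closedHalfBall hp) hx₀.le
    _ = 2 := by norm_num

lemma snd_rpow_le_one (hs : 0 ≤ s) (hp : p ∈ closedHalfBall n 1) : p.2 ^ s ≤ 1 :=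
  Real.rpow_le_one hp.2 (by simpa using snd_le_of_mem_closedHalfBall hp) hs

lemma parabolicGauge_nonneg (hp : 0 ≤ p.2) (ht : t ≤ t₀) : 0 ≤ parabolicGauge s x₀ t₀ t p :=
  add_nonneg (by positivity) (sub_nonneg.2 ht)

lemma eq_of_parabolicGauge_eq_zero (hp : 0 ≤ p.2) (ht : t ≤ t₀)
    (h : parabolicGauge s x₀ t₀ t p = 0) : t = t₀ ∧ p = (x₀, 0) := by
  have h_rpow : 0 ≤ p.2 ^ (2 * s) := Real.rpow_nonneg hp _
  unfold parabolicGauge at h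
  have h_fst : p.1 - x₀ = 0 := by
    rw [← norm_eq_zero, ← sq_eq_zero_iff]
    linarith [sq_nonneg ‖p.1 - x₀‖]
  have h_snd : p.2 = 0 :=
    ((Real.rpow_eq_zero_iff_of_nonneg hp).1 (by linarith [sq_nonneg ‖p.1 - x₀‖])).1
  exact ⟨by linarith [sq_nonneg ‖p.1 - x₀‖], Prod.ext (sub_eq_zero.1 h_fst) h_snd⟩

lemma parabolicGauge_le_six (hs : 0 ≤ s) (hx₀ : ‖x₀‖ = 1) (ht₀ : t₀ ≤ 0) (ht : -1 ≤ t)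
    (hp : p ∈ closedHalfBall n 1) : parabolicGauge s x₀ t₀ t p ≤ 6 := by
  have h_norm : ‖p.1 - x₀‖ ^ 2 ≤ 2 ^ 2 := by
    gcongr
    exact norm_sub_le_two hx₀ hp
  have h_rpow : p.2 ^ (2 * s) ≤ 1 := snd_rpow_le_one (mul_nonneg zero_le_two hs) hp
  unfold parabolicGauge
  linarith

lemma norm_sub_le_sqrt_parabolicGauge (hp : 0 ≤ p.2) (ht : t ≤ t₀) :
    ‖p.1 - x₀‖ ≤ √(parabolicGauge s x₀ t₀ t p) :=
  Real.le_sqrt_of_sq_le <| by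
    rw [parabolicGauge, add_assoc]
    exact le_add_of_nonneg_right (add_nonneg (Real.rpow_nonneg hp _) (sub_nonneg.2 ht))

lemma norm_sub_sq_add_rpow_le_tangentGap_rpow (hs : s ∈ Ioc 0 1) (hx₀ : ‖x₀‖ = 1)
    (hp : p ∈ closedHalfBall n 1) :
    ‖p.1 - x₀‖ ^ 2 + (1 + (2 * s)⁻¹) * p.2 ^ (2 * s) ≤
      (5 + (2 * s)⁻¹) * tangentGap x₀ p.1 ^ s := by
  have h_gap := norm_sub_sq_add_sq_le_tangentGap hx₀ hp
  have h_gap_le : tangentGap x₀ p.1 ≤ 4 := by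
    linarith [tangentGap_le_two_mul_norm_sub hx₀ p.1, norm_sub_le_two hx₀ hp]
  have h_norm : ‖p.1 - x₀‖ ^ 2 ≤ 4 * tangentGap x₀ p.1 ^ s :=
    calc ‖p.1 - x₀‖ ^ 2 ≤ tangentGap x₀ p.1 := by linarith [sq_nonneg p.2]
      _ ≤ 4 * tangentGap x₀ p.1 ^ s := le_mul_rpow_of_le (Ioc_subset_Icc_self hs) (by norm_num)
          (le_trans (by positivity) h_gap) h_gap_le
  have h_snd : p.2 ^ (2 * s) ≤ tangentGap x₀ p.1 ^ s :=
    calc p.2 ^ (2 * s) = (p.2 ^ 2) ^ s := by rw [Real.rpow_mul hp.2, Real.rpow_two]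
      _ ≤ tangentGap x₀ p.1 ^ s :=
          Real.rpow_le_rpow (sq_nonneg _) (by linarith [sq_nonneg ‖p.1 - x₀‖]) hs.1.le
  have h_inv : 0 ≤ (2 * s)⁻¹ := by have := hs.1; positivity
  linarith [mul_le_mul_of_nonneg_left h_snd (add_nonneg zero_le_one h_inv)]

lemma parabolicGauge_rpow_le_barrier (hs : s ∈ Ioc 0 1) (hα : α ∈ Icc 0 1) (hx₀ : ‖x₀‖ = 1)
    (ht : t ≤ t₀) (hp : p ∈ closedHalfBall n 1) {ε δ : ℝ} (hε : 0 < ε) (hδ : 0 < δ) :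
    parabolicGauge s x₀ t₀ t p ^ α ≤ barrier s α x₀ t₀ ε δ t p := by
  have h_tangent : tangentGap x₀ p.1 ^ s ≤ rpowTangent s δ (tangentGap x₀ p.1) :=
    rpow_le_rpowTangent (Ioc_subset_Icc_self hs) hδ
      (le_trans (by positivity) (norm_sub_sq_add_sq_le_tangentGap hx₀ hp))
  have h_inv : 0 ≤ (2 * s)⁻¹ := by have := hs.1; positivity
  calc parabolicGauge s x₀ t₀ t p ^ α
      ≤ rpowTangent α ε (parabolicGauge s x₀ t₀ t p) :=
        rpow_le_rpowTangent hα hε (parabolicGauge_nonneg hp.2 ht)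
    _ ≤ barrier s α x₀ t₀ ε δ t p := by
        refine rpowTangent_mono hα.1 hε ?_
        unfold parabolicGauge
        linarith [norm_sub_sq_add_rpow_le_tangentGap_rpow hs hx₀ hp,
          mul_le_mul_of_nonneg_left h_tangent (add_nonneg (by norm_num : (0 : ℝ) ≤ 5) h_inv)]

lemma barrier_le_mul_parabolicGauge_rpow (hs : s ∈ Ioc 0 1) (hα : α ∈ Icc 0 1) (hx₀ : ‖x₀‖ = 1)
    (ht₀ : t₀ ≤ 0) (ht : t ∈ Icc (-1) t₀) (hp : p ∈ closedHalfBall n 1) {d : ℝ} (hd : 0 < d)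
    (h_gauge : parabolicGauge s x₀ t₀ t p = d) :
    barrier s α x₀ t₀ (d ^ (s / 2)) √d t p ≤ (16 + 1 / s) * d ^ (s * α / 2) := by
  have hs₀ : 0 < s := hs.1
  have h_scale : √d ^ s = d ^ (s / 2) := by
    rw [Real.sqrt_eq_rpow, ← Real.rpow_mul hd.le]
    ring_nf
  have h_gap : tangentGap x₀ p.1 ≤ 2 * √d :=
    h_gauge ▸ (tangentGap_le_two_mul_norm_sub hx₀ p.1).trans
      (mul_le_mul_of_nonneg_left (norm_sub_le_sqrt_parabolicGauge hp.2 ht.2) zero_le_two)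
  have h_tangent : rpowTangent s √d (tangentGap x₀ p.1) ≤ 2 * d ^ (s / 2) :=
    h_scale ▸ rpowTangent_le_mul_rpow (Ioc_subset_Icc_self hs) (by positivity) one_le_two h_gap
  have h_rpow : 0 ≤ p.2 ^ (2 * s) := Real.rpow_nonneg hp.2 _
  have h_time : t₀ - t ≤ 6 * d ^ (s / 2) :=
    calc t₀ - t ≤ d := by rw [← h_gauge, parabolicGauge]; linarith [sq_nonneg ‖p.1 - x₀‖]
      _ ≤ 6 * d ^ (s / 2) := le_mul_rpow_of_le ⟨by positivity, by linarith [hs.2]⟩ (by norm_num)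
          hd.le (h_gauge ▸ parabolicGauge_le_six hs₀.le hx₀ ht₀ ht.1 hp)
  have h_arg : (5 + (2 * s)⁻¹) * rpowTangent s √d (tangentGap x₀ p.1)
      - (2 * s)⁻¹ * p.2 ^ (2 * s) + (t₀ - t) ≤ (16 + 1 / s) * d ^ (s / 2) :=
    calc _ ≤ (5 + (2 * s)⁻¹) * (2 * d ^ (s / 2)) - 0 + 6 * d ^ (s / 2) := by
          gcongr
          positivity
      _ = (16 + 1 / s) * d ^ (s / 2) := by field_simp; ring
  calc barrier s α x₀ t₀ (d ^ (s / 2)) √d t p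
      ≤ (16 + 1 / s) * (d ^ (s / 2)) ^ α := by
        refine rpowTangent_le_mul_rpow hα (by positivity) ?_ h_arg
        linarith [one_div_pos.2 hs₀]
    _ = (16 + 1 / s) * d ^ (s * α / 2) := by
        rw [← Real.rpow_mul hd.le]
        ring_nf

lemma isFracHeatSolution_barrier (hs : 0 < s) (α : ℝ) (x₀ : En n) (t₀ ε δ : ℝ) :
    IsFracHeatSolution (1 - 2 * s) (barrier s α x₀ t₀ ε δ) := by
  set A := α * ε ^ (α - 1)
  set B := (5 + (2 * s)⁻¹) * (s * δ ^ (s - 1))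
  have h_affine := isFracHeatSolution_const_add_inner_fst (1 - 2 * s)
    (ε ^ α + A * ((5 + (2 * s)⁻¹) * δ ^ s + B * (2 - δ) + t₀ - ε)) (-(2 * A * B) • x₀)
  have h_time := (isFracHeatSolution_time_add_snd_rpow (n := n) hs).const_mul (-A)
  convert h_affine.add h_time using 3 with t p
  rw [inner_smul_left]
  simp only [barrier, rpowTangent, tangentGap, A, B, conj_trivial]
  ring

end Barrier

theorem fhe_regularity_lateral_boundary_general {n : ℕ} {s α : ℝ} (hs : s ∈ Ioc 0 1)
    (hα : α ∈ Icc 0 1) {u : ℝ → En n × ℝ → ℝ} (hu : IsFracHeatSolution (1 - 2 * s) u)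
    {x₀ : En n} (hx₀ : ‖x₀‖ = 1) {t₀ : ℝ} (ht₀ : t₀ ≤ 0) {C₀ : ℝ} (hC₀ : 0 ≤ C₀)
    (h_bdry : ∀ q ∈ parabolicBoundary n t₀,
      |u q.1 q.2 - u t₀ (x₀, 0)| ≤ C₀ * parabolicGauge s x₀ t₀ q.1 q.2 ^ α)
    {t : ℝ} (ht : t ∈ Icc (-1) t₀) {p : En n × ℝ} (hp : p ∈ closedHalfBall n 1) :
    |u t p - u t₀ (x₀, 0)| ≤
      (16 + 1 / s) * C₀ * parabolicGauge s x₀ t₀ t p ^ (s * α / 2) := by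
  set d := parabolicGauge s x₀ t₀ t p with h_gauge
  rcases (parabolicGauge_nonneg hp.2 ht.2 : 0 ≤ d).eq_or_lt with hd | hd
  · obtain ⟨rfl, rfl⟩ := eq_of_parabolicGauge_eq_zero hp.2 ht.2 hd.symm
    rw [sub_self, abs_zero]
    have hs₀ := hs.1
    positivity
  have hε : 0 < d ^ (s / 2) := by positivity
  have hδ : 0 < √d := by positivity
  have h_barrier : |u t p + -u t₀ (x₀, 0)| ≤ C₀ * barrier s α x₀ t₀ (d ^ (s / 2)) √d t p :=
    (hu.add (isFracHeatSolution_const _ _)).abs_le_of_forall_parabolicBoundary_abs_le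
      ((isFracHeatSolution_barrier hs.1 α x₀ t₀ _ _).const_mul C₀) ht₀ (fun q hq => by
        obtain ⟨hq_time, hq_mem⟩ := parabolicBoundary_subset (ht.1.trans ht.2) hq
        exact (h_bdry q hq).trans (mul_le_mul_of_nonneg_left
          (parabolicGauge_rpow_le_barrier hs hα hx₀ hq_time.2 hq_mem hε hδ) hC₀)) ht hp
  calc |u t p - u t₀ (x₀, 0)| ≤ C₀ * barrier s α x₀ t₀ (d ^ (s / 2)) √d t p := h_barrier
    _ ≤ C₀ * ((16 + 1 / s) * d ^ (s * α / 2)) := by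
        gcongr
        exact barrier_le_mul_parabolicGauge_rpow hs hα hx₀ ht₀ ht hp hd h_gauge.symm
    _ = (16 + 1 / s) * C₀ * d ^ (s * α / 2) := by ring

/-- **Lemma 4.4 (continuity on the lateral boundary `∂B_1^0 × (-1,0)`).** If a solution
of the localized fractional heat equation separates from its value at
`(t₀, x₀, 0)`, `|x₀| = 1`, at most like `C₀ (|x-x₀|² + y^{1-a} + (t₀-t))^α` on the
parabolic boundary, then it separates at most like
`C C₀ (|x-x₀|² + y^{1-a} + (t₀-t))^{sα/2}` everywhere (here `a = 1-2s`, `1-a = 2s`). -/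
theorem fhe_regularity_lateral_boundary (n : ℕ) (hn : 1 ≤ n) (s : ℝ)
    (hs : s ∈ Ioo (0 : ℝ) (1/2)) (α : ℝ) (hα : α ∈ Ioc (0 : ℝ) 1) :
    ∃ C > 0, ∀ (u : ℝ → En n × ℝ → ℝ) (x₀ : En n) (t₀ : ℝ) (C₀ : ℝ),
      IsFracHeatSolution (1 - 2*s) u →
      ‖x₀‖ = 1 → t₀ ∈ Icc (-1 : ℝ) 0 → 0 ≤ C₀ →
      (∀ (t : ℝ) (p : En n × ℝ),
        ((t = -1 ∧ p ∈ closedHalfBall n 1) ∨ (t ∈ Icc (-1 : ℝ) t₀ ∧ p ∈ closedSpherePlus n)) →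
        |u t p - u t₀ (x₀, 0)| ≤ C₀ * (‖p.1 - x₀‖^2 + p.2 ^ (2*s) + (t₀ - t)) ^ α) →
      ∀ t ∈ Icc (-1 : ℝ) t₀, ∀ p ∈ closedHalfBall n 1,
        |u t p - u t₀ (x₀, 0)| ≤
          C * C₀ * (‖p.1 - x₀‖^2 + p.2 ^ (2*s) + (t₀ - t)) ^ (s * α / 2) := by
  have hs₁ : s ∈ Ioc 0 1 := ⟨hs.1, by linarith [hs.2]⟩
  refine ⟨16 + 1 / s, by linarith [one_div_pos.2 hs.1], fun u x₀ t₀ C₀ hu hx₀ ht₀ hC₀ h_bdry => ?_⟩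
  exact fun t ht p hp => fhe_regularity_lateral_boundary_general hs₁ (Ioc_subset_Icc_self hα) hu hx₀
    ht₀.2 hC₀ (fun q hq => h_bdry q.1 q.2 hq) ht hp

end
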